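/- Let α ∈ (0, 1/10]. (i) For all continuously differentiable f, g on (0,∞)×(0,π/2) with ‖f‖_{C¹}, ‖g‖_{C¹} < ∞: ‖fg‖_{C¹} ≤ ‖f‖_{C¹} ‖g‖_{C¹}. (ii) There is an absolute constant C such that for every continuously differentiable p with ‖((1+R)/R) p‖_{W^{1,∞}} < ∞: ‖p‖_{C¹} ≤ C ‖((1+R)/R) p‖_{W^{1,∞}}. -/

import Mathlib

open Real MeasureTheory Set

noncomputable section

namespace Paper

/-- The domain `(0,∞) × (0,π/2)` in the `(R,β)` variables. -/
def Qdom : Set (ℝ × ℝ) := Set.Ioi (0:ℝ) ×ˢ Set.Ioo (0:ℝ) (Real.pi/2)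

/-- Inner product `⟨f,g⟩ = ∫₀^∞ ∫₀^{π/2} f g dβ dR`. -/
def inner2 (f g : ℝ → ℝ → ℝ) : ℝ :=
  ∫ R in Set.Ioi (0:ℝ), ∫ β in Set.Ioo (0:ℝ) (Real.pi/2), f R β * g R β

/-- The `L²` norm `‖f‖₂`. -/
def norm2 (f : ℝ → ℝ → ℝ) : ℝ := Real.sqrt (inner2 f f)

/-- `‖h‖_{L²(R)}` for functions of `R` alone. -/
def normR (h : ℝ → ℝ) : ℝ := Real.sqrt (∫ R in Set.Ioi (0:ℝ), (h R)^2)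

/-- `D_R = R ∂_R`. -/
def DR (f : ℝ → ℝ → ℝ) : ℝ → ℝ → ℝ := fun R β => R * deriv (fun r => f r β) R

/-- `D_R` for functions of `R` alone. -/
def DR1 (h : ℝ → ℝ) : ℝ → ℝ := fun R => R * deriv h R

/-- `D_β = sin(2β) ∂_β`. -/
def Dbeta (f : ℝ → ℝ → ℝ) : ℝ → ℝ → ℝ :=
  fun R β => Real.sin (2*β) * deriv (fun b => f R b) β

/-- `L₁₂(Ω)(R) = ∫_R^∞ ∫₀^{π/2} Ω(s,β) sin(2β) s⁻¹ dβ ds`. -/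
def L12 (Ω : ℝ → ℝ → ℝ) (R : ℝ) : ℝ :=
  ∫ s in Set.Ioi R, ∫ β in Set.Ioo (0:ℝ) (Real.pi/2), Ω s β * Real.sin (2*β) / s

/-- `L̃₁₂(Ω)(R) = L₁₂(Ω)(R) − L₁₂(Ω)(0)`. -/
def tL12 (Ω : ℝ → ℝ → ℝ) (R : ℝ) : ℝ := L12 Ω R - L12 Ω 0

/-- Compact support contained in the open domain `(0,∞)×(0,π/2)`. -/
def suppIn (f : ℝ → ℝ → ℝ) : Prop :=
  ∃ K : Set (ℝ × ℝ), IsCompact K ∧ K ⊆ Qdom ∧ ∀ x y : ℝ, (x, y) ∉ K → f x y = 0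

/-- Integrability over the domain. -/
def Integrable2 (f : ℝ → ℝ → ℝ) : Prop :=
  MeasureTheory.IntegrableOn (Function.uncurry f) Qdom

/-- `Γ(β) = (cos β)^α`. -/
def Γf (α : ℝ) (β : ℝ) : ℝ := Real.cos β ^ α

/-- The normalizing constant `c = (2/π)∫₀^{π/2} Γ(β) sin(2β) dβ`. -/
def cst (α : ℝ) : ℝ :=
  (2/Real.pi) * ∫ β in Set.Ioo (0:ℝ) (Real.pi/2), Γf α β * Real.sin (2*β)

/-- The approximate profile `Ω̄`. -/
def Ωbar (α : ℝ) : ℝ → ℝ → ℝ := fun R β => (α / cst α) * Γf α β * (3*R/(1+R)^2)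

/-- The approximate profile `η̄`. -/
def ηbar (α : ℝ) : ℝ → ℝ → ℝ := fun R β => (α / cst α) * Γf α β * (6*R/(1+R)^3)

/-- The singular weight `φ₁ = (1+R)⁴R⁻⁴ sin(2β)^{-σ}`, `σ = 99/100`. -/
def phi1 : ℝ → ℝ → ℝ := fun R β => (1+R)^4 / R^4 * Real.sin (2*β) ^ (-(99/100 : ℝ))

/-- The singular weight `φ₂ = (1+R)⁴R⁻⁴ sin(2β)^{-γ}`, `γ = 1 + α/10`. -/
def phi2 (α : ℝ) : ℝ → ℝ → ℝ := fun R β => (1+R)^4 / R^4 * Real.sin (2*β) ^ (-(1 + α/10))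

/-- The singular weight `ψ₁ = (1+R)⁴R⁻⁴ (sin β cos β)^{-σ}`. -/
def psi1 : ℝ → ℝ → ℝ := fun R β =>
  (1+R)^4 / R^4 * (Real.sin β * Real.cos β) ^ (-(99/100 : ℝ))

/-- The singular weight `ψ₂ = (1+R)⁴R⁻⁴ (sin β)^{-σ}(cos β)^{-γ}`. -/
def psi2 (α : ℝ) : ℝ → ℝ → ℝ := fun R β =>
  (1+R)^4 / R^4 * Real.sin β ^ (-(99/100 : ℝ)) * Real.cos β ^ (-(1 + α/10))

/-- `c_ω = −(2/(πα)) L₁₂(Ω)(0)`. -/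
def cω (α : ℝ) (Ω : ℝ → ℝ → ℝ) : ℝ := -(2/(Real.pi*α)) * L12 Ω 0

/-- The linearized operator `L₁`. -/
def opL1 (α : ℝ) (Ω η : ℝ → ℝ → ℝ) : ℝ → ℝ → ℝ := fun R β =>
  - DR Ω R β - (3/(1+R)) * Dbeta Ω R β - Ω R β + η R β
  + cω α Ω * (Ωbar α R β - DR (Ωbar α) R β)

/-- The linearized operator `L₂`. -/
def opL2 (α : ℝ) (Ω η : ℝ → ℝ → ℝ) : ℝ → ℝ → ℝ := fun R β =>
  - DR η R β - (3/(1+R)) * Dbeta η R β + (-2 + 3/(1+R)) * η R β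
  + (2/(Real.pi*α)) * tL12 Ω R * ηbar α R β
  + cω α Ω * (ηbar α R β - DR (ηbar α) R β)

/-- `ξ̄` in Cartesian variables. -/
def ξbarC (α : ℝ) (x y : ℝ) : ℝ :=
  -(18*α^2 / cst α) * ∫ z in Set.Ioo (0:ℝ) x,
      (y/(y^2+z^2)) * (z ^ α * (z^2+y^2) ^ (α/2) / (1 + (z^2+y^2) ^ (α/2))^4)

/-- `ξ̄` in the `(R,β)` variables, via `x = R^{1/α} cos β`, `y = R^{1/α} sin β`. -/
def ξbar (α : ℝ) : ℝ → ℝ → ℝ := fun R β =>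
  ξbarC α (R ^ (1/α) * Real.cos β) (R ^ (1/α) * Real.sin β)

/-- The linearized operator `L₃`. -/
def opL3 (α : ℝ) (Ω ξ : ℝ → ℝ → ℝ) : ℝ → ℝ → ℝ := fun R β =>
  - DR ξ R β - (3/(1+R)) * Dbeta ξ R β + (-2 - 3/(1+R)) * ξ R β
  - (2/(Real.pi*α)) * tL12 Ω R * ξbar α R β
  + cω α Ω * (3 * ξbar α R β - DR (ξbar α) R β)

/-- Weighted Sobolev norm `H^m` with radial weight `w1` and angular weight `w2`:
`‖f‖ = Σ_{0≤k≤m} ‖(D_R^k f)√w1‖₂ + Σ_{i+j≤m−1} ‖(D_R^i D_β^{j+1} f)√w2‖₂`. -/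
def Hnorm (m : ℕ) (w1 w2 : ℝ → ℝ → ℝ) (f : ℝ → ℝ → ℝ) : ℝ :=
  (∑ k ∈ Finset.range (m+1),
    norm2 (fun R β => DR^[k] f R β * Real.sqrt (w1 R β)))
  + ∑ p ∈ (Finset.range (m+1) ×ˢ Finset.range (m+1)).filter
      (fun p => p.1 + p.2 + 1 ≤ m),
      norm2 (fun R β => DR^[p.1] (Dbeta^[p.2+1] f) R β * Real.sqrt (w2 R β))

/-- Sup of `|f|` over the domain `(0,∞)×(0,π/2)`. -/
def supDom (f : ℝ → ℝ → ℝ) : ℝ :=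
  ⨆ (R : Set.Ioi (0:ℝ)) (β : Set.Ioo (0:ℝ) (Real.pi/2)), |f R.1 β.1|

/-- The weighted `C¹` norm. -/
def C1norm (α : ℝ) (f : ℝ → ℝ → ℝ) : ℝ :=
  supDom f + supDom (fun R β => (1+R)/R * DR f R β)
  + supDom (fun R β =>
      (1 + (R * Real.sin (2*β) ^ α) ^ (-(1/40 : ℝ))) * Dbeta f R β)

/-- Boundedness of `f` on the domain. -/
def BddDom (f : ℝ → ℝ → ℝ) : Prop :=
  ∃ M : ℝ, ∀ R ∈ Set.Ioi (0:ℝ), ∀ β ∈ Set.Ioo (0:ℝ) (Real.pi/2), |f R β| ≤ M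

/-- Finiteness of the weighted `C¹` norm. -/
def C1Fin (α : ℝ) (f : ℝ → ℝ → ℝ) : Prop :=
  BddDom f ∧ BddDom (fun R β => (1+R)/R * DR f R β) ∧
  BddDom (fun R β => (1 + (R * Real.sin (2*β) ^ α) ^ (-(1/40 : ℝ))) * Dbeta f R β)

/-- The weighted `W^{l,∞}` norm. -/
def Wnorm (α : ℝ) (l : ℕ) (f : ℝ → ℝ → ℝ) : ℝ :=
  (∑ k ∈ Finset.range (l+1), supDom (DR^[k] f))
  + ∑ p ∈ (Finset.range (l+1) ×ˢ Finset.range (l+1)).filter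
      (fun p => p.1 + p.2 ≤ l ∧ 1 ≤ p.2),
      supDom (fun R β => Real.sin (2*β) ^ (-(α/5)) *
        DR^[p.1] (fun R' β' => Dbeta^[p.2] f R' β' / (α/10 + Real.sin (2*β'))) R β)

/-- Finiteness of the `W^{l,∞}` norm. -/
def WFin (α : ℝ) (l : ℕ) (f : ℝ → ℝ → ℝ) : Prop :=
  (∀ k ≤ l, BddDom (DR^[k] f)) ∧
  ∀ k j : ℕ, k + j ≤ l → 1 ≤ j →
    BddDom (fun R β => Real.sin (2*β) ^ (-(α/5)) *
      DR^[k] (fun R' β' => Dbeta^[j] f R' β' / (α/10 + Real.sin (2*β'))) R β)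

/-- `I(f)(x,y) = ∫₀ˣ f(z,y)/z dz`. -/
def Ifun (f : ℝ → ℝ → ℝ) : ℝ → ℝ → ℝ := fun x y => ∫ z in Set.Ioo (0:ℝ) x, f z y / z

/-- `D_S g = (1/α)(z ∂_z g + y ∂_y g)` in Cartesian variables. -/
def DScart (α : ℝ) (g : ℝ → ℝ → ℝ) : ℝ → ℝ → ℝ := fun a b =>
  (1/α) * (a * deriv (fun a' => g a' b) a + b * deriv (fun b' => g a b') b)

/-- `D_τ g = 2y ∂_y g − 2α (y²/(y²+z²)) D_S g` in Cartesian variables. -/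
def DTcart (α : ℝ) (g : ℝ → ℝ → ℝ) : ℝ → ℝ → ℝ := fun a b =>
  2*b * deriv (fun b' => g a b') b - 2*α*(b^2/(b^2+a^2)) * DScart α g a b

lemma supDom_le' {f : ℝ → ℝ → ℝ} {M : ℝ}
    (h : ∀ R ∈ Set.Ioi (0:ℝ), ∀ β ∈ Set.Ioo (0:ℝ) (Real.pi/2), |f R β| ≤ M) : supDom f ≤ M := by
  have hM : 0 ≤ M := (abs_nonneg _).trans (h 1 (by simp) (Real.pi/4)
    ⟨by positivity, by linarith [Real.pi_pos]⟩)
  exact Real.iSup_le (fun R => Real.iSup_le (fun β => h R.1 R.2 β.1 β.2) hM) hM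

lemma le_supDom' {f : ℝ → ℝ → ℝ} (hf : BddDom f) {R β : ℝ}
    (hR : R ∈ Set.Ioi (0:ℝ)) (hβ : β ∈ Set.Ioo (0:ℝ) (Real.pi/2)) : |f R β| ≤ supDom f := by
  obtain ⟨M, hM⟩ := hf
  have hM0 : 0 ≤ M := (abs_nonneg _).trans (hM R hR β hβ)
  have h1 : |f R β| ≤ ⨆ (b : Set.Ioo (0:ℝ) (Real.pi/2)), |f R b.1| :=
    le_ciSup (f := fun b : Set.Ioo (0:ℝ) (Real.pi/2) => |f R b.1|)
      ⟨M, by rintro _ ⟨b, rfl⟩; exact hM R hR b.1 b.2⟩ ⟨β, hβ⟩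
  have h2 : (⨆ (b : Set.Ioo (0:ℝ) (Real.pi/2)), |f R b.1|) ≤ supDom f :=
    le_ciSup (f := fun r : Set.Ioi (0:ℝ) => ⨆ (b : Set.Ioo (0:ℝ) (Real.pi/2)), |f r.1 b.1|)
      ⟨M, by rintro _ ⟨r, rfl⟩; exact Real.iSup_le (fun b => hM r.1 r.2 b.1 b.2) hM0⟩ ⟨R, hR⟩
  exact h1.trans h2

lemma supDom_nonneg' (f : ℝ → ℝ → ℝ) : 0 ≤ supDom f :=
  Real.iSup_nonneg fun _ => Real.iSup_nonneg fun _ => abs_nonneg _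

lemma diffAt_Q {f : ℝ → ℝ → ℝ} (hf : ContDiffOn ℝ 1 (Function.uncurry f) Qdom) {R β : ℝ}
    (hR : R ∈ Set.Ioi (0:ℝ)) (hβ : β ∈ Set.Ioo (0:ℝ) (Real.pi/2)) :
    DifferentiableAt ℝ (fun r => f r β) R ∧ DifferentiableAt ℝ (fun b => f R b) β := by
  have hO : IsOpen Qdom := isOpen_Ioi.prod isOpen_Ioo
  have h : DifferentiableAt ℝ (Function.uncurry f) (R, β) :=
    (hf.differentiableOn (by norm_num)).differentiableAt (hO.mem_nhds ⟨hR, hβ⟩)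
  constructor
  · exact h.comp R (f := fun r => (r, β)) (by fun_prop)
  · exact h.comp β (f := fun b => (R, b)) (by fun_prop)

lemma weight_bound {α R s : ℝ} (hα : 0 < α) (hα1 : α ≤ 1/10) (hR : 0 < R) (hs : 0 < s)
    (hs1 : s ≤ 1) :
    (1 + (R * s ^ α) ^ (-(1/40 : ℝ))) * (R/(1+R)) * (α/10 + s) ≤ 3 * s ^ (-(α/5)) := by
  have e : (R * s ^ α) ^ (-(1/40 : ℝ)) = R ^ (-(1/40 : ℝ)) * s ^ (-(α/40)) := by
    rw [Real.mul_rpow hR.le (by positivity), ← Real.rpow_mul hs.le]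
    congr 2; ring
  have h1 : s ^ (-(α/40)) ≤ s ^ (-(α/5)) :=
    Real.rpow_le_rpow_of_exponent_ge hs hs1 (by linarith)
  have h2 : 1 ≤ s ^ (-(α/5)) :=
    Real.one_le_rpow_of_pos_of_le_one_of_nonpos hs hs1 (by linarith)
  have h3 : R ^ (-(1/40 : ℝ)) * (R/(1+R)) ≤ 1 := by
    have : R ^ (-(1/40 : ℝ)) * R = R ^ (39/40 : ℝ) := by
      nth_rewrite 2 [← Real.rpow_one R]
      rw [← Real.rpow_add hR]; norm_num
    rw [← mul_div_assoc, this, div_le_one (by linarith)]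
    rcases le_total R 1 with h | h
    · linarith [Real.rpow_le_one hR.le h (by norm_num : (0:ℝ) ≤ 39/40)]
    · have := Real.rpow_le_rpow_of_exponent_le h (by norm_num : (39/40 : ℝ) ≤ 1)
      rw [Real.rpow_one] at this
      linarith
  have h4 : R/(1+R) ≤ 1 := by rw [div_le_one (by linarith)]; linarith
  have h5 : (1 + (R * s ^ α) ^ (-(1/40 : ℝ))) * (R/(1+R)) ≤ 2 * s ^ (-(α/5)) := by
    rw [e]
    have : R ^ (-(1/40 : ℝ)) * (R/(1+R)) * s ^ (-(α/40)) ≤ 1 * s ^ (-(α/5)) := by gcongr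
    nlinarith
  calc _ ≤ 2 * s ^ (-(α/5)) * (3/2) := by gcongr; linarith
    _ = _ := by ring

lemma part_one (α : ℝ) (f g : ℝ → ℝ → ℝ)
    (hf : ContDiffOn ℝ 1 (Function.uncurry f) Qdom)
    (hg : ContDiffOn ℝ 1 (Function.uncurry g) Qdom)
    (Ff : C1Fin α f) (Fg : C1Fin α g) :
    C1norm α (fun R β => f R β * g R β) ≤ C1norm α f * C1norm α g := by
  obtain ⟨f0, f1, f2⟩ := Ff
  obtain ⟨g0, g1, g2⟩ := Fg
  unfold C1norm
  set wb : ℝ → ℝ → ℝ := fun R β => 1 + (R * Real.sin (2*β) ^ α) ^ (-(1/40 : ℝ)) with hwb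
  have key : ∀ a b c d A B C D : ℝ, |a| ≤ A → |b| ≤ B → |c| ≤ C → |d| ≤ D →
      |a * b + c * d| ≤ A * B + C * D := by
    intro a b c d A B C D ha hb hc hd
    refine (abs_add_le _ _).trans ?_
    rw [abs_mul, abs_mul]
    have := (abs_nonneg a).trans ha
    have := (abs_nonneg c).trans hc
    gcongr
  have e0 : supDom (fun R β => f R β * g R β) ≤ supDom f * supDom g := by
    refine supDom_le' fun R hR β hβ => ?_
    rw [abs_mul]
    exact mul_le_mul (le_supDom' f0 hR hβ) (le_supDom' g0 hR hβ) (abs_nonneg _)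
      (supDom_nonneg' _)
  have e1 : supDom (fun R β => (1+R)/R * DR (fun R β => f R β * g R β) R β) ≤
      supDom (fun R β => (1+R)/R * DR f R β) * supDom g +
      supDom f * supDom (fun R β => (1+R)/R * DR g R β) := by
    refine supDom_le' fun R hR β hβ => ?_
    have : (1+R)/R * DR (fun R β => f R β * g R β) R β =
        ((1+R)/R * DR f R β) * g R β + f R β * ((1+R)/R * DR g R β) := by
      simp only [DR]
      rw [deriv_fun_mul (diffAt_Q hf hR hβ).1 (diffAt_Q hg hR hβ).1]
      ring
    rw [this]
    exact key _ _ _ _ _ _ _ _ (le_supDom' f1 hR hβ) (le_supDom' g0 hR hβ)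
      (le_supDom' f0 hR hβ) (le_supDom' g1 hR hβ)
  have e2 : supDom (fun R β => (1 + (R * Real.sin (2*β) ^ α) ^ (-(1/40 : ℝ))) *
        Dbeta (fun R β => f R β * g R β) R β) ≤
      supDom (fun R β => (1 + (R * Real.sin (2*β) ^ α) ^ (-(1/40 : ℝ))) * Dbeta f R β) * supDom g +
      supDom f *
        supDom (fun R β => (1 + (R * Real.sin (2*β) ^ α) ^ (-(1/40 : ℝ))) * Dbeta g R β) := by
    refine supDom_le' fun R hR β hβ => ?_
    have : (1 + (R * Real.sin (2*β) ^ α) ^ (-(1/40 : ℝ))) *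
          Dbeta (fun R β => f R β * g R β) R β =
        ((1 + (R * Real.sin (2*β) ^ α) ^ (-(1/40 : ℝ))) * Dbeta f R β) * g R β +
        f R β * ((1 + (R * Real.sin (2*β) ^ α) ^ (-(1/40 : ℝ))) * Dbeta g R β) := by
      simp only [Dbeta]
      rw [deriv_fun_mul (diffAt_Q hf hR hβ).2 (diffAt_Q hg hR hβ).2]
      ring
    rw [this]
    exact key _ _ _ _ _ _ _ _ (le_supDom' f2 hR hβ) (le_supDom' g0 hR hβ)
      (le_supDom' f0 hR hβ) (le_supDom' g2 hR hβ)
  have p1 := supDom_nonneg' (fun R β => (1+R)/R * DR f R β)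
  have p2 := supDom_nonneg'
    (fun R β => (1 + (R * Real.sin (2*β) ^ α) ^ (-(1/40 : ℝ))) * Dbeta f R β)
  have q1 := supDom_nonneg' (fun R β => (1+R)/R * DR g R β)
  have q2 := supDom_nonneg'
    (fun R β => (1 + (R * Real.sin (2*β) ^ α) ^ (-(1/40 : ℝ))) * Dbeta g R β)
  refine (add_le_add (add_le_add e0 e1) e2).trans ?_
  have := mul_nonneg (add_nonneg p1 p2) (add_nonneg q1 q2)
  linarith

lemma part_two (α : ℝ) (hα : 0 < α) (hα1 : α ≤ 1/10) (p : ℝ → ℝ → ℝ)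
    (hp : ContDiffOn ℝ 1 (Function.uncurry p) Qdom)
    (hW : WFin α 1 (fun R β => (1+R)/R * p R β)) :
    C1norm α p ≤ 3 * Wnorm α 1 (fun R β => (1+R)/R * p R β) := by
  obtain ⟨hk, hj⟩ := hW
  set q : ℝ → ℝ → ℝ := fun R β => (1+R)/R * p R β with hq
  have b0 : BddDom q := hk 0 (by norm_num)
  have b1 : BddDom (DR q) := hk 1 le_rfl
  have b2 : BddDom (fun R β => Real.sin (2*β) ^ (-(α/5)) *
      (Dbeta q R β / (α/10 + Real.sin (2*β)))) := hj 0 1 (by norm_num) le_rfl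
  have hWn : Wnorm α 1 q = supDom q + supDom (DR q) +
      supDom (fun R β => Real.sin (2*β) ^ (-(α/5)) *
      (Dbeta q R β / (α/10 + Real.sin (2*β)))) := by
    have : (Finset.range (1+1) ×ˢ Finset.range (1+1)).filter
      (fun p : ℕ × ℕ => p.1 + p.2 ≤ 1 ∧ 1 ≤ p.2) = {(0,1)} := by decide
    unfold Wnorm
    rw [this, Finset.sum_singleton, Finset.sum_range_succ, Finset.sum_range_one]
    rfl
  have e0 : supDom p ≤ supDom q := by
    refine supDom_le' fun R hR β hβ => (le_trans ?_ (le_supDom' b0 hR hβ))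
    have hR' : (0:ℝ) < R := hR
    simp only [hq, abs_mul]
    have : 1 ≤ |(1+R)/R| := by
      rw [abs_of_pos (by positivity), one_le_div hR']; linarith
    nlinarith [abs_nonneg (p R β)]
  have e1 : supDom (fun R β => (1+R)/R * DR p R β) ≤ supDom q + supDom (DR q) := by
    refine supDom_le' fun R hR β hβ => ?_
    have hR' : (0:ℝ) < R := hR
    have hd := (diffAt_Q hp hR hβ).1.hasDerivAt
    have hw : HasDerivAt (fun r : ℝ => (1+r)/r) ((1 * R - (1+R) * 1)/R^2) R :=
      ((hasDerivAt_id R).const_add 1).div (hasDerivAt_id R) hR'.ne'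
    have : (1+R)/R * DR p R β = 1/(1+R) * q R β + DR q R β := by
      simp only [DR, hq]
      rw [(hw.fun_mul hd).deriv]
      field_simp
      ring
    rw [this]
    refine (abs_add_le _ _).trans (add_le_add ?_ (le_supDom' b1 hR hβ))
    refine le_trans ?_ (le_supDom' b0 hR hβ)
    rw [abs_mul]
    have : |1/(1+R)| ≤ 1 := by
      rw [abs_of_pos (by positivity), div_le_one (by positivity)]; linarith
    exact mul_le_of_le_one_left (abs_nonneg _) this
  have e2 : supDom (fun R β => (1 + (R * Real.sin (2*β) ^ α) ^ (-(1/40 : ℝ))) * Dbeta p R β) ≤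
      3 * supDom (fun R β => Real.sin (2*β) ^ (-(α/5)) *
      (Dbeta q R β / (α/10 + Real.sin (2*β)))) := by
    refine supDom_le' fun R hR β hβ => ?_
    have hR' : (0:ℝ) < R := hR
    have hs : 0 < Real.sin (2*β) :=
      Real.sin_pos_of_pos_of_lt_pi (by linarith [hβ.1]) (by linarith [hβ.2])
    have hb := weight_bound hα hα1 hR' hs (Real.sin_le_one _)
    refine le_trans ?_ (mul_le_mul_of_nonneg_left (le_supDom' b2 hR hβ) (by norm_num))
    have hD : Dbeta q R β = (1+R)/R * Dbeta p R β := by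
      simp only [Dbeta, hq]
      rw [deriv_const_mul _ (diffAt_Q hp hR hβ).2]
      ring
    set s := Real.sin (2*β)
    set w := 1 + (R * s ^ α) ^ (-(1/40 : ℝ)) with hw
    have hw0 : 0 < w := by positivity
    have hpos : 0 < α/10 + s := by positivity
    have hE : w * Dbeta p R β = (w * (R/(1+R)) * (α/10 + s)) * (Dbeta q R β / (α/10 + s)) := by
      rw [hD]; field_simp
    rw [hE, abs_mul, abs_mul (s ^ _), abs_of_pos (by positivity : 0 < w * (R/(1+R)) * (α/10 + s)),
      abs_of_pos (by positivity : 0 < s ^ (-(α/5))), ← mul_assoc]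
    exact mul_le_mul_of_nonneg_right hb (abs_nonneg _)
  rw [hWn]
  unfold C1norm
  have := supDom_nonneg' q
  have := supDom_nonneg' (DR q)
  linarith

/-- product rule for the weighted `C¹` norm, and control of the
`C¹` norm by the weighted `W^{1,∞}` norm. -/
theorem C1_product_and_W1infty_control :
    (∀ α : ℝ, 0 < α → α ≤ 1/10 → ∀ f g : ℝ → ℝ → ℝ,
      ContDiffOn ℝ 1 (Function.uncurry f) Qdom →
      ContDiffOn ℝ 1 (Function.uncurry g) Qdom →
      C1Fin α f → C1Fin α g →
      C1norm α (fun R β => f R β * g R β) ≤ C1norm α f * C1norm α g) ∧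
    (∃ C : ℝ, ∀ α : ℝ, 0 < α → α ≤ 1/10 → ∀ p : ℝ → ℝ → ℝ,
      ContDiffOn ℝ 1 (Function.uncurry p) Qdom →
      WFin α 1 (fun R β => (1+R)/R * p R β) →
      C1norm α p ≤ C * Wnorm α 1 (fun R β => (1+R)/R * p R β)) := by
  exact ⟨fun α _ _ f g hf hg Ff Fg => part_one α f g hf hg Ff Fg,
    3, fun α h0 h1 p hp hW => part_two α h0 h1 p hp hW⟩

end Paper
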